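/- arXiv:2410.04669 — 4 statements merged into one kernel-verified Lean document; each statement's English description precedes it below -/
import Mathlib

section
/- Let D be a digraph, let S ⊆ E(D) be any set of arcs, and let < and ◁ be any two linear orders on V(D). Then the compositions produced by the two orders coincide: α^<_D(S) = α^◁_D(S). In other words, the composition α_D(S) is well defined, independently of the chosen labeling (linear ordering) of the vertices of D. -/
/-!
Digraph conventions: a digraph `D` on a finite vertex type `V` is given by an arc set
`E : Finset (V × V)` all of whose arcs `(u, v)` satisfy `u ≠ v`.  For an arc set `S`,
`arcGraph S` is the simple graph with edge set `S' = {{u,v} : (u,v) ∈ S}`.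
-/

open scoped Classical

noncomputable section

/-- The undirected simple graph underlying an arc set `S`: `u` and `v` are adjacent
iff `u ≠ v` and (`(u,v) ∈ S` or `(v,u) ∈ S`). -/
def arcGraph {V : Type} (S : Finset (V × V)) : SimpleGraph V :=
  SimpleGraph.fromRel (fun u v => (u, v) ∈ S)

/-- The set of connected components (as vertex subsets) of the spanning subgraph
`(V, S')`. -/
def comps {V : Type} [Fintype V] [DecidableEq V] (S : Finset (V × V)) : Finset (Finset V) :=
  Finset.univ.image (fun v => Finset.univ.filter (fun w => (arcGraph S).Reachable v w))

/-- Outdegree of a vertex with respect to an arc set: the number of arcs with first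
coordinate `w`. -/
def od {V : Type} [DecidableEq V] (E : Finset (V × V)) (w : V) : ℤ :=
  (E.filter (fun a => a.1 = w)).card

/-- Indegree of a vertex with respect to an arc set: the number of arcs with second
coordinate `w`. -/
def indeg {V : Type} [DecidableEq V] (E : Finset (V × V)) (w : V) : ℤ :=
  (E.filter (fun a => a.2 = w)).card

/-- Total degree of a vertex subset `W`: the sum of the outdegrees of its elements
minus the sum of their indegrees. -/
def td {V : Type} [DecidableEq V] (E : Finset (V × V)) (W : Finset V) : ℤ :=
  (∑ w ∈ W, od E w) - ∑ w ∈ W, indeg E w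

/-- The increasing word of the elements of the finite set `C` with respect to the
linear order `r`. -/
def word {V : Type} (r : LinearOrder V) (C : Finset V) : List V :=
  letI := r
  C.sort (· ≤ ·)

/-- The relation `⊳^r` on vertex subsets: `tri E r C C'` holds iff `td C > td C'`, or
`td C = td C'` and `|C| > |C'|`, or `td C = td C'` and `|C| = |C'|` and the increasing
word of `C` is lexicographically strictly greater than that of `C'` with respect to `r`. -/
def tri {V : Type} [DecidableEq V] (E : Finset (V × V)) (r : LinearOrder V)
    (C C' : Finset V) : Prop :=
  td E C > td E C' ∨
    (td E C = td E C' ∧ C.card > C'.card) ∨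
      (td E C = td E C' ∧ C.card = C'.card ∧ List.Lex r.lt (word r C') (word r C))

/-- The connected components of `(V, S')`, listed in decreasing `⊳^r`-order. -/
def sortedComps {V : Type} [Fintype V] [DecidableEq V]
    (E S : Finset (V × V)) (r : LinearOrder V) : List (Finset V) :=
  (comps S).toList.mergeSort (fun C C' => decide (tri E r C C' ∨ C = C'))

/-- The composition `α^r_D(S)`: the sizes of the connected components of `(V, S')`,
listed in decreasing `⊳^r`-order. -/
def alphaComp {V : Type} [Fintype V] [DecidableEq V]
    (E S : Finset (V × V)) (r : LinearOrder V) : List ℕ :=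
  (sortedComps E S r).map Finset.card

/-!
The order `⊳` on vertex sets is pulled back from a lexicographic product along
`C ↦ ((td C, |C|), word of C)`.  The labeling enters only through the last coordinate, so sorting
the components by `⊳` sorts the pairs `(td C, |C|)` decreasingly for every labeling, and the list
of sizes is read off from these sorted pairs.
-/

/-- The pair `(td C, |C|)`, ordered lexicographically: the part of the comparison `⊳` that does not
involve the labeling of the vertices. -/
def weight {V : Type} [DecidableEq V] (E : Finset (V × V)) (C : Finset V) : ℤ ×ₗ ℕ :=
  toLex (td E C, C.card)

/-- The weight of `C` refined by its increasing word: the full key by which `⊳` compares vertex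
sets. -/
def labeledWeight {V : Type} [DecidableEq V] (E : Finset (V × V)) (r : LinearOrder V)
    (C : Finset V) : (ℤ ×ₗ ℕ) ×ₗ List V :=
  toLex (weight E C, word r C)

theorem word_injective {V : Type} (r : LinearOrder V) : Function.Injective (word r) := by
  intro C C' h
  have hsort : C.sort (· ≤ ·) = C'.sort (· ≤ ·) := h
  simpa only [Finset.sort_toFinset] using congrArg List.toFinset hsort

section

variable {V : Type} [DecidableEq V] (E : Finset (V × V))

section

variable [r : LinearOrder V]

theorem labeledWeight_injective : Function.Injective (labeledWeight E r) := fun _ _ h =>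
  word_injective r (congrArg (fun w => (ofLex w).2) h)

theorem tri_iff_labeledWeight_lt {C C' : Finset V} :
    tri E r C C' ↔ labeledWeight E r C' < labeledWeight E r C := by
  have word_lt_iff : List.Lex r.lt (word r C') (word r C) ↔ word r C' < word r C := Iff.rfl
  simp only [tri, labeledWeight, weight, Prod.Lex.toLex_lt_toLex, toLex_inj, Prod.mk.injEq,
    word_lt_iff]
  grind

theorem tri_or_eq_iff_labeledWeight_le {C C' : Finset V} :
    tri E r C C' ∨ C = C' ↔ labeledWeight E r C' ≤ labeledWeight E r C := by
  rw [tri_iff_labeledWeight_lt, le_iff_lt_or_eq, (labeledWeight_injective E).eq_iff,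
    eq_comm (a := C)]

theorem sortedComps_pairwise_labeledWeight [Fintype V] (S : Finset (V × V)) :
    (sortedComps E S r).Pairwise (fun C C' => labeledWeight E r C' ≤ labeledWeight E r C) := by
  have le_iff : ∀ C C', decide (tri E r C C' ∨ C = C') = true ↔
      labeledWeight E r C' ≤ labeledWeight E r C := fun _ _ =>
    decide_eq_true_iff.trans (tri_or_eq_iff_labeledWeight_le E)
  refine (List.pairwise_mergeSort ?_ ?_ _).imp (le_iff _ _).1
  · simp only [le_iff]
    exact fun _ _ _ hab hbc => hbc.trans hab
  · simp only [Bool.or_eq_true, le_iff]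
    exact fun _ _ => le_total _ _

end

variable [Fintype V] (S : Finset (V × V)) (r : LinearOrder V)

theorem map_weight_sortedComps :
    (sortedComps E S r).map (weight E) = ((comps S).val.map (weight E)).sort (· ≥ ·) := by
  have pairwise_ge : ((sortedComps E S r).map (weight E)).Pairwise (· ≥ ·) :=
    (sortedComps_pairwise_labeledWeight E S).map _ fun _ _ h => Prod.Lex.monotone_fst _ _ h
  have coe_sortedComps : (sortedComps E S r : Multiset (Finset V)) = (comps S).val :=
    (Multiset.coe_eq_coe.2 (List.mergeSort_perm _ _)).trans (Finset.coe_toList _)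
  calc (sortedComps E S r).map (weight E)
      = Multiset.sort ((sortedComps E S r).map (weight E)) (· ≥ ·) :=
        (List.mergeSort_eq_self _ pairwise_ge).symm
    _ = ((comps S).val.map (weight E)).sort (· ≥ ·) := by
        rw [← Multiset.map_coe, coe_sortedComps]

theorem alphaComp_eq_map_sort_weight :
    alphaComp E S r =
      (((comps S).val.map (weight E)).sort (· ≥ ·)).map (fun w => (ofLex w).2) := by
  rw [← map_weight_sortedComps E S r, List.map_map]
  rfl

end

/-- For a digraph `D = (V, E)` and any arc subset `S ⊆ E`, any two
linear orders on the vertex set produce the same composition `α_D(S)`; that is,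
`α_D(S)` is well defined independently of the chosen labeling of the vertices. -/
theorem alphaComp_well_defined {V : Type} [Fintype V] [DecidableEq V]
    (E : Finset (V × V)) (hE : ∀ e ∈ E, e.1 ≠ e.2)
    (S : Finset (V × V)) (hS : S ⊆ E)
    (r₁ r₂ : LinearOrder V) :
    alphaComp E S r₁ = alphaComp E S r₂ := by
  rw [alphaComp_eq_map_sort_weight, alphaComp_eq_map_sort_weight]

end
end

section
/- Let D be a digraph with underlying undirected simple graph G. Then χ(X_D) = X_G; that is, the commutative image of the chromatic noncommutative symmetric function of D is the chromatic symmetric function of G. -/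
/-!
Digraph conventions: a digraph `D` on a finite vertex type `V` is given by an arc set
`E : Finset (V × V)` all of whose arcs `(u, v)` satisfy `u ≠ v`.  For an arc set `S`,
`arcGraph S` is the simple graph with edge set `S' = {{u,v} : (u,v) ∈ S}`.
-/

open scoped Classical

noncomputable section

/-- `NSym`, the algebra of noncommutative symmetric functions over `ℚ`, modeled as the
free associative `ℚ`-algebra on countably many noncommuting generators; the generator
indexed by `n : ℕ` is the noncommutative power sum `Ψ_{n+1}`, so that `NSym` is free
on `Ψ_1, Ψ_2, …`, with `Ψ_n` of degree `n`. -/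
abbrev NSym : Type := FreeAlgebra ℚ ℕ

/-- The noncommutative power sum generator `Ψ_n` (intended for `n ≥ 1`). -/
def Psi (n : ℕ) : NSym := FreeAlgebra.ι ℚ (n - 1)

/-- `Ψ_α` for a composition `α = (α_1, …, α_ℓ)`: the product `Ψ_{α_1} Ψ_{α_2} ⋯ Ψ_{α_ℓ}`,
with `Ψ_{()} = 1`. -/
def PsiComp (l : List ℕ) : NSym := (l.map Psi).prod

/-- The chromatic noncommutative symmetric function of the digraph with arc set `E`,
computed using the linear order `r` on the vertices:
`X_D = Σ_{S ⊆ E} (−1)^{|S|} Ψ_{α(S)}`. -/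
def XD {V : Type} [Fintype V] [DecidableEq V] (E : Finset (V × V)) (r : LinearOrder V) :
    NSym :=
  ∑ S ∈ E.powerset, ((-1 : ℚ) ^ S.card) • PsiComp (alphaComp E S r)

/-- The power sum `p_n = Σ_{i ∈ ℕ} x_i^n` in `MvPowerSeries ℕ ℚ` (intended for `n ≥ 1`). -/
def psum (n : ℕ) : MvPowerSeries ℕ ℚ :=
  fun d => if ∃ i : ℕ, d = Finsupp.single i n then 1 else 0

/-- `p_λ = p_{λ_1} ⋯ p_{λ_ℓ}` for a partition `λ = (λ_1, …, λ_ℓ)`. -/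
def psumProd (l : List ℕ) : MvPowerSeries ℕ ℚ := (l.map psum).prod

/-- The forgetful morphism `χ : NSym → MvPowerSeries ℕ ℚ`, i.e. the unique `ℚ`-algebra
homomorphism with `χ(Ψ_n) = p_n` for all `n ≥ 1`. -/
def chi : NSym →ₐ[ℚ] MvPowerSeries ℕ ℚ :=
  FreeAlgebra.lift ℚ (fun n : ℕ => psum (n + 1))

/-- A proper coloring of a simple graph: adjacent vertices receive distinct colors. -/
def Proper {V : Type} (G : SimpleGraph V) (κ : V → ℕ) : Prop :=
  ∀ u v, G.Adj u v → κ u ≠ κ v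

/-- The chromatic symmetric function `X_G = Σ_κ Π_{v ∈ V} x_{κ(v)}` of a finite simple
graph `G`, as an element of `MvPowerSeries ℕ ℚ`: the coefficient of the monomial `d` is
the (finite) number of proper colorings `κ : V → ℕ` using each color `c` exactly `d c`
times. -/
def XG {V : Type} [Fintype V] [DecidableEq V] (G : SimpleGraph V) : MvPowerSeries ℕ ℚ :=
  fun d =>
    (Nat.card {κ : V → ℕ // Proper G κ ∧
      ∀ c : ℕ, (Finset.univ.filter (fun v => κ v = c)).card = d c} : ℚ)

/-!
The coefficient of `x^d` in `∏ᵢ p_{nᵢ}` counts the functions `i ↦ κ i` with `∏ᵢ x_{κ i} ^ nᵢ = x^d`.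
When the `nᵢ` are the sizes of the components of a graph, such functions are the same as vertex
colorings of content `d` that are constant on components, that is, monochromatic on every edge.
The order in which `α(S)` lists the components disappears under `χ`, so the coefficient of `x^d` in
`χ(X_D)` is the alternating sum over `S ⊆ E` of the number of colorings of content `d` that are
monochromatic on every arc of `S`. By inclusion–exclusion this counts the colorings of content `d`
that are monochromatic on no arc of `E`.
-/

section Content

variable {ι σ : Type*} [Fintype ι]

/-- The exponent of the monomial `∏ i, x_{κ i} ^ n i`, that is, the content of the coloring `κ`
of points `i` with multiplicities `n i`. For ordinary colorings take `n = 1`. -/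
def content (n : ι → ℕ) (κ : ι → σ) : σ →₀ ℕ :=
  ∑ i, Finsupp.single (κ i) (n i)

lemma content_one_apply [DecidableEq σ] (κ : ι → σ) (c : σ) :
    content 1 κ c = (Finset.univ.filter fun i => κ i = c).card := by
  simp [content, Finsupp.finsetSum_apply, Finsupp.single_apply]

lemma content_comp {Q : Type*} [Fintype Q] (n : ι → ℕ) (π : ι → Q) (f : Q → σ) :
    content n (f ∘ π) = content (fun q => ∑ i with π i = q, n i) f := by
  rw [content, ← Finset.sum_fiberwise Finset.univ π]
  refine Finset.sum_congr rfl fun q _ => ?_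
  rw [Finsupp.single_finsetSum]
  refine Finset.sum_congr rfl fun i hi => ?_
  rw [Function.comp_apply, (Finset.mem_filter.mp hi).2]

lemma finite_setOf_content_eq {n : ι → ℕ} (hn : ∀ i, n i ≠ 0) (d : σ →₀ ℕ) :
    {κ : ι → σ | content n κ = d}.Finite := by
  refine (Set.Finite.pi' fun _ => d.support.finite_toSet).subset ?_
  rintro κ rfl i
  have h_single_le : Finsupp.single (κ i) (n i) ≤ content n κ :=
    Finset.single_le_sum (f := fun j => Finsupp.single (κ j) (n j))
      (fun _ _ => zero_le) (Finset.mem_univ i)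
  have h_le : n i ≤ content n κ (κ i) := by simpa using h_single_le (κ i)
  exact Finsupp.mem_support_iff.mpr ((Nat.pos_of_ne_zero (hn i)).trans_le h_le).ne'

lemma coeff_prod_psum {n : ι → ℕ} (hn : ∀ i, n i ≠ 0) (d : ℕ →₀ ℕ) :
    MvPowerSeries.coeff d (∏ i, psum (n i)) = ({κ : ι → ℕ | content n κ = d}.ncard : ℚ) := by
  let exponents (κ : ι → ℕ) : ι →₀ ℕ →₀ ℕ :=
    Finsupp.equivFunOnFinite.symm fun i => Finsupp.single (κ i) (n i)
  have exponents_injective : Function.Injective exponents := fun κ κ' h => funext fun i =>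
    Finsupp.single_left_injective (hn i) (DFunLike.congr_fun h i)
  have image_exponents : exponents '' {κ | content n κ = d} =
      ((Finset.univ.finsuppAntidiag d).filter
        fun l => ∀ i, ∃ k, l i = Finsupp.single k (n i) : Finset (ι →₀ ℕ →₀ ℕ)) := by
    ext l
    simp only [Set.mem_image, Set.mem_ofPred_eq, Finset.coe_filter, Finset.mem_finsuppAntidiag,
      Finset.subset_univ, and_true]
    constructor
    · rintro ⟨κ, hκ, rfl⟩
      exact ⟨hκ, fun i => ⟨κ i, rfl⟩⟩
    · rintro ⟨hsum, hl⟩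
      choose κ hκ using hl
      exact ⟨κ, by simpa only [content, ← hκ] using hsum, Finsupp.ext fun i => (hκ i).symm⟩
  have coeff_psum (e : ℕ →₀ ℕ) (m : ℕ) :
      MvPowerSeries.coeff e (psum m) = if ∃ k, e = Finsupp.single k m then 1 else 0 := rfl
  rw [← Set.ncard_image_of_injective _ exponents_injective, image_exponents,
    Set.ncard_coe_finset, MvPowerSeries.coeff_prod]
  simp only [coeff_psum, Finset.prod_ite_zero, Finset.prod_const_one, Finset.mem_univ,
    true_imp_iff, Finset.sum_boole]

end Content

section Components

variable {V : Type*} (G : SimpleGraph V)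

lemma range_comp_connectedComponentMk (σ : Type*) :
    Set.range (fun f : G.ConnectedComponent → σ => f ∘ G.connectedComponentMk) =
      {κ | ∀ u v, G.Adj u v → κ u = κ v} := by
  ext κ
  constructor
  · rintro ⟨f, rfl⟩ u v huv
    exact congrArg f (SimpleGraph.ConnectedComponent.connectedComponentMk_eq_of_adj huv)
  · intro hκ
    have eq_of_walk {u v : V} (p : G.Walk u v) : κ u = κ v := by
      induction p with
      | nil => rfl
      | cons huv _ ih => exact (hκ _ _ huv).trans ih
    exact ⟨SimpleGraph.ConnectedComponent.lift κ fun _ _ p _ => eq_of_walk p, rfl⟩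

lemma content_one_comp_connectedComponentMk [Fintype V] [Fintype G.ConnectedComponent]
    {σ : Type*} (f : G.ConnectedComponent → σ) :
    content 1 (f ∘ G.connectedComponentMk) = content (fun c => c.supp.ncard) f := by
  rw [content_comp]
  congr 1
  funext c
  simp only [Pi.one_apply]
  rw [← Finset.card_eq_sum_ones, ← Set.ncard_coe_finset, Finset.coe_filter_univ]
  rfl

lemma coeff_prod_psum_connectedComponent [Fintype V] [Fintype G.ConnectedComponent]
    (d : ℕ →₀ ℕ) :
    MvPowerSeries.coeff d (∏ c : G.ConnectedComponent, psum c.supp.ncard) =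
      ({κ : V → ℕ | content 1 κ = d ∧ ∀ u v, G.Adj u v → κ u = κ v}.ncard : ℚ) := by
  have ncard_supp_ne_zero (c : G.ConnectedComponent) : c.supp.ncard ≠ 0 :=
    Set.ncard_ne_zero_of_mem c.nonempty_supp.some_mem
  have comp_mk_injective :
      Function.Injective fun f : G.ConnectedComponent → ℕ => f ∘ G.connectedComponentMk :=
    Quot.mk_surjective.injective_comp_right
  rw [coeff_prod_psum ncard_supp_ne_zero, ← Set.ncard_image_of_injective _ comp_mk_injective]
  simp only [← content_one_comp_connectedComponentMk]
  congr 2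
  exact (Set.image_preimage_eq_inter_range (t := {κ | content 1 κ = d})).trans
    (congrArg _ (range_comp_connectedComponentMk G ℕ))

end Components

section InclusionExclusion

variable {α β : Type*}

lemma ncard_setOf_forall_not [Finite β] (E : Finset α) (P : α → β → Prop) :
    ({x | ∀ a ∈ E, ¬ P a x}.ncard : ℤ) =
      ∑ S ∈ E.powerset, (-1) ^ S.card * ({x | ∀ a ∈ S, P a x}.ncard : ℤ) := by
  have := Fintype.ofFinite β
  have card_inf_filter (S : Finset α) (Q : α → β → Prop) [∀ a, DecidablePred (Q a)] :
      (S.inf fun a => Finset.univ.filter (Q a)).card = {x | ∀ a ∈ S, Q a x}.ncard := by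
    rw [← Set.ncard_coe_finset]
    congr 1
    ext x
    simp [Finset.mem_inf]
  simpa only [Finset.compl_filter, card_inf_filter] using
    Finset.inclusion_exclusion_card_inf_compl E fun a => Finset.univ.filter (P a)

lemma ncard_setOf_mem_and_forall_not {K : Set β} (hK : K.Finite) (E : Finset α)
    (P : α → β → Prop) :
    ({x | x ∈ K ∧ ∀ a ∈ E, ¬ P a x}.ncard : ℤ) =
      ∑ S ∈ E.powerset, (-1) ^ S.card * ({x | x ∈ K ∧ ∀ a ∈ S, P a x}.ncard : ℤ) := by
  have := hK.to_subtype
  have ncard_eq_ncard_subtype (Q : β → Prop) :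
      {x | x ∈ K ∧ Q x}.ncard = {x : K | Q x}.ncard := by
    rw [Set.ofPred_and, Set.inter_comm]
    exact (Set.ncard_subtype (· ∈ K) {x | Q x}).symm
  simp only [ncard_eq_ncard_subtype]
  exact ncard_setOf_forall_not E fun a (x : K) => P a x

end InclusionExclusion

section Digraph

variable {V : Type}

lemma forall_arcGraph_adj_iff {p : V → V → Prop} (hp : ∀ u v, p u v → p v u)
    (S : Finset (V × V)) :
    (∀ u v, (arcGraph S).Adj u v → p u v) ↔ ∀ a ∈ S, a.1 ≠ a.2 → p a.1 a.2 := by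
  constructor
  · exact fun h a ha hne => h _ _ ⟨hne, .inl ha⟩
  · rintro h u v ⟨hne, huv | hvu⟩
    · exact h _ huv hne
    · exact hp _ _ (h _ hvu hne.symm)

lemma proper_arcGraph_iff {E : Finset (V × V)} (hE : ∀ e ∈ E, e.1 ≠ e.2) (κ : V → ℕ) :
    Proper (arcGraph E) κ ↔ ∀ a ∈ E, κ a.1 ≠ κ a.2 :=
  (forall_arcGraph_adj_iff (fun _ _ => Ne.symm) E).trans
    (forall₂_congr fun a ha => forall_prop_of_true (hE a ha))

lemma forall_arcGraph_adj_eq_iff {σ : Type*} (S : Finset (V × V)) (κ : V → σ) :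
    (∀ u v, (arcGraph S).Adj u v → κ u = κ v) ↔ ∀ a ∈ S, κ a.1 = κ a.2 :=
  (forall_arcGraph_adj_iff (fun _ _ => Eq.symm) S).trans
    (forall₂_congr fun a _ =>
      ⟨fun h => (eq_or_ne a.1 a.2).elim (congrArg κ) h, fun h _ => h⟩)

lemma chi_Psi {n : ℕ} (hn : n ≠ 0) : chi (Psi n) = psum n := by
  rw [chi, Psi, FreeAlgebra.lift_ι_apply, Nat.sub_one_add_one hn]

lemma chi_PsiComp {l : List ℕ} (hl : 0 ∉ l) : chi (PsiComp l) = psumProd l := by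
  rw [PsiComp, map_list_prod, List.map_map, psumProd]
  exact congrArg List.prod (List.map_congr_left fun n hn => chi_Psi (ne_of_mem_of_not_mem hn hl))

variable [Fintype V] [DecidableEq V]

lemma coeff_XG (G : SimpleGraph V) (d : ℕ →₀ ℕ) :
    MvPowerSeries.coeff d (XG G) = ({κ | content 1 κ = d ∧ Proper G κ}.ncard : ℚ) := by
  have mem_iff (κ : V → ℕ) :
      (Proper G κ ∧ ∀ c, (Finset.univ.filter fun v => κ v = c).card = d c) ↔
        content 1 κ = d ∧ Proper G κ := by
    rw [Finsupp.ext_iff, and_comm]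
    simp only [content_one_apply]
  exact congrArg Nat.cast (Nat.card_congr (Equiv.subtypeEquivRight mem_iff))

lemma comps_eq_image_supp (S : Finset (V × V)) :
    comps S =
      Finset.univ.image fun c : (arcGraph S).ConnectedComponent => c.supp.toFinset := by
  ext C
  simp only [comps, Finset.mem_image, Finset.mem_univ, true_and,
    SimpleGraph.ConnectedComponent.exists]
  refine exists_congr fun v => ?_
  have filter_eq : (Finset.univ.filter fun w => (arcGraph S).Reachable v w) =
      ((arcGraph S).connectedComponentMk v).supp.toFinset := by
    ext w
    simp [SimpleGraph.reachable_comm]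
  rw [filter_eq]

lemma alphaComp_perm (E S : Finset (V × V)) (r : LinearOrder V) :
    (alphaComp E S r).Perm ((comps S).toList.map Finset.card) :=
  (List.mergeSort_perm _ _).map _

lemma zero_notMem_alphaComp (E S : Finset (V × V)) (r : LinearOrder V) :
    0 ∉ alphaComp E S r := by
  simp only [(alphaComp_perm E S r).mem_iff, comps_eq_image_supp, List.mem_map, Finset.mem_toList,
    Finset.mem_image, not_exists, not_and]
  rintro _ ⟨c, -, rfl⟩
  exact Finset.card_ne_zero.mpr (Set.toFinset_nonempty.mpr c.nonempty_supp)

lemma psumProd_alphaComp (E S : Finset (V × V)) (r : LinearOrder V) :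
    psumProd (alphaComp E S r) =
      ∏ c : (arcGraph S).ConnectedComponent, psum c.supp.ncard := by
  have toFinset_supp_injective : Function.Injective
      fun c : (arcGraph S).ConnectedComponent => c.supp.toFinset := fun _ _ h =>
    SimpleGraph.ConnectedComponent.supp_injective (Set.toFinset_inj.mp h)
  rw [psumProd, ((alphaComp_perm E S r).map psum).prod_eq, List.map_map, Finset.prod_map_toList,
    comps_eq_image_supp, Finset.prod_image toFinset_supp_injective.injOn]
  simp only [Function.comp_apply, Set.ncard_eq_toFinset_card']

lemma coeff_psumProd_alphaComp (E S : Finset (V × V)) (r : LinearOrder V) (d : ℕ →₀ ℕ) :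
    MvPowerSeries.coeff d (psumProd (alphaComp E S r)) =
      ({κ : V → ℕ | content 1 κ = d ∧ ∀ a ∈ S, κ a.1 = κ a.2}.ncard : ℚ) := by
  rw [psumProd_alphaComp, coeff_prod_psum_connectedComponent]
  simp only [forall_arcGraph_adj_eq_iff]

lemma chi_XD (E : Finset (V × V)) (r : LinearOrder V) :
    chi (XD E r) = ∑ S ∈ E.powerset, (-1 : ℚ) ^ S.card • psumProd (alphaComp E S r) := by
  simp only [XD, map_sum, map_smul, chi_PsiComp (zero_notMem_alphaComp E _ r)]

end Digraph

/-- For a digraph `D = (V, E)` with underlying undirected simple graph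
`G`, the commutative image of the chromatic noncommutative symmetric function of `D` is
the chromatic symmetric function of `G`: `χ(X_D) = X_G`. -/
theorem chi_XD_eq_XG {V : Type} [Fintype V] [DecidableEq V]
    (E : Finset (V × V)) (hE : ∀ e ∈ E, e.1 ≠ e.2) (r : LinearOrder V) :
    chi (XD E r) = XG (arcGraph E) := by
  ext d
  have finite_colorings : {κ : V → ℕ | content 1 κ = d}.Finite :=
    finite_setOf_content_eq (fun _ => one_ne_zero) d
  calc MvPowerSeries.coeff d (chi (XD E r))
      = ∑ S ∈ E.powerset, (-1 : ℚ) ^ S.card *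
          ({κ : V → ℕ | content 1 κ = d ∧ ∀ a ∈ S, κ a.1 = κ a.2}.ncard : ℚ) := by
        simp only [chi_XD, map_sum, map_smul, smul_eq_mul, coeff_psumProd_alphaComp]
    _ = ({κ : V → ℕ | content 1 κ = d ∧ ∀ a ∈ E, κ a.1 ≠ κ a.2}.ncard : ℚ) := by
        exact_mod_cast (ncard_setOf_mem_and_forall_not finite_colorings E
          fun a κ => κ a.1 = κ a.2).symm
    _ = MvPowerSeries.coeff d (XG (arcGraph E)) := by
        simp only [coeff_XG, proper_arcGraph_iff hE]

end
end

section
/- Let {D_i}_{i ≥ 1} be a family of digraphs such that |V(D_i)| = i for each i and such that the undirected graph underlying each D_i is connected. Then NSym = ℚ⟨X_{D_1}, X_{D_2}, …⟩, and the elements X_{D_1}, X_{D_2}, … are algebraically independent over ℚ. Concretely, the unique ℚ-algebra homomorphism from the free associative ℚ-algebra on countably many noncommuting generators y_1, y_2, … to NSym sending y_i ↦ X_{D_i} is bijective. -/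
/-!
Digraph conventions: a digraph `D` on a finite vertex type `V` is given by an arc set
`E : Finset (V × V)` all of whose arcs `(u, v)` satisfy `u ≠ v`.  For an arc set `S`,
`arcGraph S` is the simple graph with edge set `S' = {{u,v} : (u,v) ∈ S}`.
-/

open scoped Classical

noncomputable section

/-!
Discarding from `X_D` the arc sets `S` that do not connect `V` leaves a multiple of `Ψ_n`, where
`n = |V|`, because every component of a disconnected `(V, S')` has fewer than `n` vertices. The
system expressing the `X_{D_i}` through the `Ψ_i` is therefore triangular, and it can be inverted
because the diagonal coefficients are units.

The diagonal coefficient is `∑ (-1)^|S|` over the connected spanning arc sets `S`. It is nonzero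
because its sign is `(-1)^(n-1)`: in the deletion-contraction recursion the two terms never have
opposite signs. This only uses that the partitions of `V` form a geometric lattice, in which an
arc is the atom identifying its two ends.
-/

section SpanningSum

-- Below, `φ i` are the atoms of a geometric lattice and `ρ` is its corank.
variable {ι α : Type*} [SemilatticeSup α] {φ : ι → α} {ρ : α → ℕ}

lemma sup_eq_sup_of_le_sup (hρ : StrictAnti ρ) (hρφ : ∀ x i, ¬φ i ≤ x → ρ (x ⊔ φ i) + 1 = ρ x)
    {x : α} {i j : ι} (hij : φ j ≤ x ⊔ φ i) (hj : ¬φ j ≤ x) : x ⊔ φ j = x ⊔ φ i := by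
  have hi : ¬φ i ≤ x := fun hi => hj (hij.trans (sup_le le_rfl hi))
  refine (sup_le le_sup_left hij).eq_of_not_lt fun hlt => ?_
  have := hρ hlt
  have := hρφ x i hi
  have := hρφ x j hj
  omega

variable [OrderBot α]

/-- The alternating sum `∑ (-1)^|S|` over the sets `S ⊆ E` that generate `t` over `x`, i.e. such
that the join of `x` and all `φ i`, `i ∈ S`, is `t`. Keeping the base point `x` variable turns
contraction of an element `i` into the replacement of `x` by `x ⊔ φ i`. -/
def spanningSum (φ : ι → α) (t x : α) (E : Finset ι) : ℤ :=
  ∑ S ∈ E.powerset with x ⊔ S.sup φ = t, (-1) ^ S.card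

lemma spanningSum_empty (t x : α) :
    spanningSum φ t x ∅ = if x = t then 1 else 0 := by
  simp [spanningSum, Finset.sum_filter]

lemma spanningSum_insert (t x : α) {E : Finset ι} {e : ι} (he : e ∉ E) :
    spanningSum φ t x (insert e E) = spanningSum φ t x E - spanningSum φ t (x ⊔ φ e) E := by
  simp only [spanningSum, Finset.sum_filter]
  rw [Finset.sum_powerset_insert he, sub_eq_add_neg, ← Finset.sum_neg_distrib]
  congr 1
  refine Finset.sum_congr rfl fun S hS => ?_
  have heS : e ∉ S := fun h => he (Finset.mem_powerset.1 hS h)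
  rw [Finset.card_insert_of_notMem heS, Finset.sup_insert, ← sup_assoc, pow_succ]
  split_ifs <;> simp

lemma sign_mul_spanningSum_insert (t : α) {x : α} {E : Finset ι} {e : ι} (he : e ∉ E)
    (hex : ρ (x ⊔ φ e) + 1 = ρ x) :
    (-1) ^ (ρ x + ρ t) * spanningSum φ t x (insert e E) =
      (-1) ^ (ρ x + ρ t) * spanningSum φ t x E +
        (-1) ^ (ρ (x ⊔ φ e) + ρ t) * spanningSum φ t (x ⊔ φ e) E := by
  rw [spanningSum_insert t x he, ← hex]
  ring

lemma sign_mul_spanningSum_nonneg (hρφ : ∀ x i, ¬φ i ≤ x → ρ (x ⊔ φ i) + 1 = ρ x) (t x : α)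
    (E : Finset ι) : 0 ≤ (-1) ^ (ρ x + ρ t) * spanningSum φ t x E := by
  induction E using Finset.induction_on generalizing x with
  | empty =>
    rw [spanningSum_empty]
    split_ifs with hxt
    · simp [hxt, ← two_mul]
    · simp
  | insert e E he ih =>
    by_cases hex : φ e ≤ x
    · simp [spanningSum_insert t x he, sup_eq_left.2 hex]
    · rw [sign_mul_spanningSum_insert t he (hρφ x e hex)]
      exact add_nonneg (ih x) (ih _)

theorem sign_mul_spanningSum_pos (hρ : StrictAnti ρ)
    (hρφ : ∀ x i, ¬φ i ≤ x → ρ (x ⊔ φ i) + 1 = ρ x) {t x : α} {E : Finset ι}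
    (hEx : ∀ i ∈ E, ¬φ i ≤ x) (hEt : x ⊔ E.sup φ = t) :
    0 < (-1) ^ (ρ x + ρ t) * spanningSum φ t x E := by
  induction E using Finset.induction_on generalizing x with
  | empty =>
    obtain rfl : x = t := by simpa using hEt
    simp [spanningSum_empty, ← two_mul]
  | insert e E he ih =>
    rw [sign_mul_spanningSum_insert t he (hρφ x e (hEx e (Finset.mem_insert_self e E)))]
    have hEx' : ∀ i ∈ E, ¬φ i ≤ x := fun i hi => hEx i (Finset.mem_insert_of_mem hi)
    rw [Finset.sup_insert, ← sup_assoc] at hEt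
    by_cases hloop : ∃ i ∈ E, φ i ≤ x ⊔ φ e
    · -- `e` and `i` are parallel over `x`, so `E` still generates `t` once `e` is deleted.
      obtain ⟨i, hi, hie⟩ := hloop
      have hE : x ⊔ E.sup φ = t := by
        rw [← hEt, ← sup_eq_sup_of_le_sup hρ hρφ hie (hEx' i hi), sup_assoc,
          sup_eq_right.2 (Finset.le_sup hi)]
      exact add_pos_of_pos_of_nonneg (ih hEx' hE) (sign_mul_spanningSum_nonneg hρφ t _ E)
    · push Not at hloop
      exact add_pos_of_nonneg_of_pos (sign_mul_spanningSum_nonneg hρφ t x E) (ih hloop hEt)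

end SpanningSum

section Partitions

variable {V : Type*}

/-- The finest equivalence relation on `V` identifying `u` and `v`: for `u ≠ v` an atom of the
lattice of partitions of `V`, and for `u = v` the discrete partition `⊥`. -/
def glue (u v : V) : Setoid V :=
  Relation.EqvGen.setoid fun a b => a = u ∧ b = v

lemma glue_le_iff {u v : V} {r : Setoid V} : glue u v ≤ r ↔ r u v := by
  refine ⟨fun h => h (.rel _ _ ⟨rfl, rfl⟩), fun h => Setoid.eqvGen_le ?_⟩
  rintro _ _ ⟨rfl, rfl⟩
  exact h

/-- The map sending a vertex to its `r`-class, except that the class of `v` is redirected to the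
class of `u`. -/
def redirect (r : Setoid V) (u v x : V) : Quotient r :=
  if r x v then ⟦u⟧ else ⟦x⟧

lemma sup_glue_eq_ker_redirect (r : Setoid V) (u v : V) :
    r ⊔ glue u v = Setoid.ker (redirect r u v) := by
  apply le_antisymm
  · refine sup_le (fun x y hxy => ?_) (glue_le_iff.2 ?_)
    · have hv : r x v ↔ r y v := ⟨r.trans (r.symm hxy), r.trans hxy⟩
      simp only [Setoid.ker_def, redirect, hv, Quotient.sound hxy]
    · simp [Setoid.ker_def, redirect]
  · have hle : r ≤ r ⊔ glue u v := le_sup_left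
    have huv : (r ⊔ glue u v) u v := glue_le_iff.1 le_sup_right
    have hredirect (x : V) : ∃ x', redirect r u v x = ⟦x'⟧ ∧ (r ⊔ glue u v) x x' := by
      by_cases hx : r x v
      · exact ⟨u, if_pos hx, Setoid.trans' _ (hle hx) (Setoid.symm' _ huv)⟩
      · exact ⟨x, if_neg hx, Setoid.refl' _ x⟩
    intro x y hxy
    obtain ⟨x', hx, hxx'⟩ := hredirect x
    obtain ⟨y', hy, hyy'⟩ := hredirect y
    have hxy' : r x' y' := Quotient.exact (hx.symm.trans (hxy.trans hy))
    exact Setoid.trans' _ (Setoid.trans' _ hxx' (hle hxy')) (Setoid.symm' _ hyy')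

lemma range_redirect {r : Setoid V} {u v : V} (huv : ¬r u v) :
    Set.range (redirect r u v) = {⟦v⟧}ᶜ := by
  apply Set.Subset.antisymm
  · rintro _ ⟨x, rfl⟩ (hx : redirect r u v x = ⟦v⟧)
    unfold redirect at hx
    split_ifs at hx with hxv
    · exact huv (Quotient.exact hx)
    · exact hxv (Quotient.exact hx)
  · intro q hq
    induction q using Quotient.inductionOn with
    | h x => exact ⟨x, if_neg fun hxv => hq (Quotient.sound hxv)⟩

lemma card_quotient_sup_glue [Finite V] {r : Setoid V} {u v : V} (huv : ¬r u v) :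
    Nat.card (Quotient (r ⊔ glue u v)) + 1 = Nat.card (Quotient r) := by
  rw [sup_glue_eq_ker_redirect, Nat.card_congr (Setoid.quotientKerEquivRange _),
    range_redirect huv, Nat.card_coe_set_eq, ← Set.ncard_singleton (⟦v⟧ : Quotient r), add_comm,
    Set.ncard_add_ncard_compl]

lemma strictAnti_card_quotient [Finite V] :
    StrictAnti fun r : Setoid V => Nat.card (Quotient r) := by
  intro r s hrs
  let f : Quotient r → Quotient s := Quotient.map id fun _ _ hxy => hrs.le hxy
  have hf : Function.Surjective f := Quotient.map_surjective _ Function.surjective_id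
  by_contra! hcard
  have hinj : Function.Injective f := (hf.bijective_of_nat_card_le hcard).injective
  exact hrs.not_ge fun {_ _} hxy => Quotient.exact (hinj (Quotient.sound hxy))

end Partitions

section ConnectedArcSets

variable {V : Type}

lemma reachableSetoid_arcGraph (S : Finset (V × V)) :
    (arcGraph S).reachableSetoid = S.sup fun a => glue a.1 a.2 := by
  apply le_antisymm
  · rintro u v ⟨p⟩
    induction p with
    | nil => exact Setoid.refl' _ _
    | cons hadj _ ih =>
      refine Setoid.trans' _ ?_ ih
      have harc {a : V × V} (ha : a ∈ S) : (S.sup fun a => glue a.1 a.2) a.1 a.2 :=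
        glue_le_iff.1 (Finset.le_sup (f := fun a : V × V => glue a.1 a.2) ha)
      exact hadj.2.elim harc fun h => Setoid.symm' _ (harc h)
  · refine Finset.sup_le fun a ha => glue_le_iff.2 ?_
    obtain heq | hne := eq_or_ne a.1 a.2
    · exact heq ▸ SimpleGraph.Reachable.refl _
    · exact SimpleGraph.Adj.reachable ⟨hne, Or.inl ha⟩

lemma arcGraph_connected_iff [Nonempty V] (S : Finset (V × V)) :
    (arcGraph S).Connected ↔ (S.sup fun a => glue a.1 a.2) = ⊤ := by
  rw [← reachableSetoid_arcGraph, SimpleGraph.connected_iff, Setoid.eq_top_iff]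
  exact and_iff_left inferInstance

/-- The alternating sum `∑ (-1)^|S|` over the arc sets `S ⊆ E` that connect all of `V`; it is the
coefficient of `Ψ_{|V|}` in the chromatic function of the digraph `(V, E)`. -/
def connectedSum (E : Finset (V × V)) : ℤ :=
  ∑ S ∈ E.powerset with (arcGraph S).Connected, (-1) ^ S.card

lemma connectedSum_eq_spanningSum [Nonempty V] (E : Finset (V × V)) :
    connectedSum E = spanningSum (fun a : V × V => glue a.1 a.2) ⊤ ⊥ E := by
  simp only [connectedSum, spanningSum, bot_sup_eq, arcGraph_connected_iff]

theorem connectedSum_ne_zero [Finite V] {E : Finset (V × V)} (hE : ∀ e ∈ E, e.1 ≠ e.2)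
    (hconn : (arcGraph E).Connected) : connectedSum E ≠ 0 := by
  have := hconn.nonempty
  have hpos := sign_mul_spanningSum_pos (x := ⊥) strictAnti_card_quotient
    (fun _ _ h => card_quotient_sup_glue (mt glue_le_iff.2 h))
    (fun e he h => hE e he (glue_le_iff.1 h))
    (bot_sup_eq _ |>.trans ((arcGraph_connected_iff E).1 hconn))
  rw [connectedSum_eq_spanningSum]
  exact right_ne_zero_of_mul hpos.ne'

end ConnectedArcSets

section LeadingTerm

variable {V : Type} [Fintype V] [DecidableEq V]

lemma comps_of_connected {S : Finset (V × V)} (h : (arcGraph S).Connected) :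
    comps S = {Finset.univ} := by
  have := h.nonempty
  have hreach (v : V) : (Finset.univ.filter fun w => (arcGraph S).Reachable v w) = Finset.univ :=
    Finset.filter_true_of_mem fun w _ => h.preconnected v w
  simp only [comps, hreach, Finset.image_const Finset.univ_nonempty]

lemma nonempty_of_mem_comps {S : Finset (V × V)} {C : Finset V} (hC : C ∈ comps S) :
    C.Nonempty := by
  obtain ⟨v, -, rfl⟩ := Finset.mem_image.1 hC
  exact ⟨v, by simp⟩

lemma card_lt_of_mem_comps {S : Finset (V × V)} (h : ¬(arcGraph S).Connected) {C : Finset V}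
    (hC : C ∈ comps S) : C.card < Fintype.card V := by
  obtain ⟨v, -, rfl⟩ := Finset.mem_image.1 hC
  have hv : ∃ w, ¬(arcGraph S).Reachable v w := by
    by_contra! hv
    exact h (SimpleGraph.connected_iff_exists_forall_reachable _ |>.2 ⟨v, hv⟩)
  obtain ⟨w, hw⟩ := hv
  exact Finset.card_lt_univ_of_notMem (x := w) (by simpa using hw)

lemma sortedComps_perm (E S : Finset (V × V)) (r : LinearOrder V) :
    (sortedComps E S r).Perm (comps S).toList :=
  List.mergeSort_perm _ _

lemma alphaComp_of_connected (E : Finset (V × V)) {S : Finset (V × V)} (r : LinearOrder V)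
    (h : (arcGraph S).Connected) : alphaComp E S r = [Fintype.card V] := by
  have hperm := sortedComps_perm E S r
  rw [comps_of_connected h, Finset.toList_singleton, List.perm_singleton] at hperm
  simp [alphaComp, hperm]

lemma PsiComp_alphaComp_of_connected (E : Finset (V × V)) {S : Finset (V × V)} (r : LinearOrder V)
    (h : (arcGraph S).Connected) :
    PsiComp (alphaComp E S r) = FreeAlgebra.ι ℚ (Fintype.card V - 1) := by
  simp [alphaComp_of_connected E r h, PsiComp, Psi]

lemma PsiComp_alphaComp_mem_adjoin (E : Finset (V × V)) {S : Finset (V × V)} (r : LinearOrder V)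
    (h : ¬(arcGraph S).Connected) :
    PsiComp (alphaComp E S r) ∈
      Algebra.adjoin ℚ (FreeAlgebra.ι ℚ '' Set.Iio (Fintype.card V - 1)) := by
  refine Subalgebra.list_prod_mem _ fun x hx => ?_
  simp only [alphaComp, List.map_map, List.mem_map, Function.comp_apply] at hx
  obtain ⟨C, hC, rfl⟩ := hx
  rw [(sortedComps_perm E S r).mem_iff, Finset.mem_toList] at hC
  have hpos := (nonempty_of_mem_comps hC).card_pos
  have hlt := card_lt_of_mem_comps h hC
  exact Algebra.subset_adjoin ⟨C.card - 1, by rw [Set.mem_Iio]; omega, rfl⟩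

theorem XD_sub_connectedSum_smul_mem_adjoin (E : Finset (V × V)) (r : LinearOrder V) :
    XD E r - (connectedSum E : ℚ) • FreeAlgebra.ι ℚ (Fintype.card V - 1) ∈
      Algebra.adjoin ℚ (FreeAlgebra.ι ℚ '' Set.Iio (Fintype.card V - 1)) := by
  have hXD : XD E r - (connectedSum E : ℚ) • FreeAlgebra.ι ℚ (Fintype.card V - 1) =
      ∑ S ∈ E.powerset with ¬(arcGraph S).Connected,
        (-1 : ℚ) ^ S.card • PsiComp (alphaComp E S r) := by
    rw [XD, connectedSum, Finset.sum_filter, Finset.sum_filter, Int.cast_sum, Finset.sum_smul,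
      ← Finset.sum_sub_distrib]
    refine Finset.sum_congr rfl fun S _ => ?_
    by_cases hS : (arcGraph S).Connected
    · simp [hS, PsiComp_alphaComp_of_connected E r hS]
    · simp [hS]
  rw [hXD]
  exact Subalgebra.sum_mem _ fun S hS => Subalgebra.smul_mem _
    (PsiComp_alphaComp_mem_adjoin E r (Finset.mem_filter.1 hS).2) _

end LeadingTerm

section Triangular

variable {R X : Type*} [CommRing R] [Preorder X]

/-- A family `Y` in the free algebra on `X` is triangular if each `Y i` is a unit multiple of the
generator `i` plus a noncommutative polynomial in the generators below `i`. -/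
def IsTriangular (Y : X → FreeAlgebra R X) : Prop :=
  ∀ i, ∃ c : Rˣ, Y i - c • FreeAlgebra.ι R i ∈ Algebra.adjoin R (FreeAlgebra.ι R '' Set.Iio i)

variable [WellFoundedLT X] {Y : X → FreeAlgebra R X}

namespace IsTriangular

lemma exists_lift_eq_ι (hY : IsTriangular Y) (i : X) :
    ∃ z, FreeAlgebra.lift R Y z = FreeAlgebra.ι R i ∧
      ∃ c : Rˣ, z - c • FreeAlgebra.ι R i ∈ Algebra.adjoin R (FreeAlgebra.ι R '' Set.Iio i) := by
  induction i using WellFoundedLT.induction with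
  | _ i ih =>
    let A (j : X) : Subalgebra R (FreeAlgebra R X) :=
      Algebra.adjoin R (FreeAlgebra.ι R '' Set.Iio j)
    obtain ⟨c, hc⟩ := hY i
    have hA : A i ≤ (A i).map (FreeAlgebra.lift R Y) := by
      refine Algebra.adjoin_le ?_
      rintro _ ⟨j, hj, rfl⟩
      obtain ⟨z, hzj, d, hd⟩ := ih j hj
      have hAj : A j ≤ A i :=
        Algebra.adjoin_mono (Set.image_mono (Set.Iio_subset_Iio (le_of_lt hj)))
      have hι : d • FreeAlgebra.ι R j ∈ A i :=
        Subalgebra.smul_mem _ (Algebra.subset_adjoin (Set.mem_image_of_mem _ hj)) (d : R)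
      have hz : z ∈ A i := by simpa using add_mem (hAj hd) hι
      exact ⟨z, hz, hzj⟩
    obtain ⟨w, hw, hwY⟩ := hA hc
    refine ⟨c⁻¹ • (FreeAlgebra.ι R i - w), ?_, c⁻¹, ?_⟩
    · have hwY' : FreeAlgebra.lift R Y w = Y i - c • FreeAlgebra.ι R i := hwY
      rw [Units.smul_def, map_smul, map_sub, FreeAlgebra.lift_ι_apply, hwY', sub_sub_cancel,
        ← Units.smul_def, inv_smul_smul]
    · rw [smul_sub, sub_sub_cancel_left]
      exact neg_mem (Subalgebra.smul_mem _ hw ((c⁻¹ : Rˣ) : R))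

lemma exists_comp_eq_id (hY : IsTriangular Y) :
    ∃ Z, IsTriangular Z ∧
      (FreeAlgebra.lift R Y).comp (FreeAlgebra.lift R Z) = AlgHom.id R (FreeAlgebra R X) := by
  choose Z hYZ hZ using hY.exists_lift_eq_ι
  exact ⟨Z, hZ, FreeAlgebra.hom_ext (by ext i; simp [hYZ])⟩

theorem bijective_lift (hY : IsTriangular Y) : Function.Bijective (FreeAlgebra.lift R Y) := by
  -- Being triangular, the right inverse `Z` has a right inverse itself, so it is two-sided.
  obtain ⟨Z, hZ, hYZ⟩ := hY.exists_comp_eq_id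
  obtain ⟨W, -, hZW⟩ := hZ.exists_comp_eq_id
  have hYZ' : Function.LeftInverse (FreeAlgebra.lift R Y) (FreeAlgebra.lift R Z) :=
    DFunLike.congr_fun hYZ
  have hZW' : Function.LeftInverse (FreeAlgebra.lift R Z) (FreeAlgebra.lift R W) :=
    DFunLike.congr_fun hZW
  have hbij : Function.Bijective (FreeAlgebra.lift R Z) := ⟨hYZ'.injective, hZW'.surjective⟩
  rw [← Function.Bijective.of_comp_iff _ hbij, hYZ'.comp_eq_id]
  exact Function.bijective_id

end IsTriangular

end Triangular

theorem NSym_free_on_chromatic_generators_general {V : ℕ → Type} [∀ i, Fintype (V i)]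
    [∀ i, DecidableEq (V i)] (hV : ∀ i, Fintype.card (V i) = i + 1)
    (r : ∀ i, LinearOrder (V i)) (E : ∀ i, Finset (V i × V i)) (hE : ∀ i, ∀ e ∈ E i, e.1 ≠ e.2)
    (hconn : ∀ i, (arcGraph (E i)).Connected) :
    Function.Bijective
      (FreeAlgebra.lift ℚ (fun i : ℕ => XD (E i) (r i)) : FreeAlgebra ℚ ℕ →ₐ[ℚ] NSym) := by
  refine IsTriangular.bijective_lift fun i => ?_
  have hc : (connectedSum (E i) : ℚ) ≠ 0 :=
    Int.cast_ne_zero.2 (connectedSum_ne_zero (hE i) (hconn i))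
  refine ⟨Units.mk0 _ hc, ?_⟩
  simpa [hV i] using XD_sub_connectedSum_smul_mem_adjoin (E i) (r i)

/-- Let `{D_i}_{i ≥ 1}` be a family of digraphs such that `D_i` has
exactly `i` vertices and the undirected graph underlying `D_i` is connected (here the
digraph `D_{i+1}`, for `i : ℕ`, has vertex set `Fin (i+1)` and arc set `E i`).  Then
`NSym = ℚ⟨X_{D_1}, X_{D_2}, …⟩` and the `X_{D_i}` are algebraically independent over
`ℚ`: the unique `ℚ`-algebra homomorphism from the free associative `ℚ`-algebra on
countably many noncommuting generators to `NSym` sending the `i`-th generator to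
`X_{D_{i+1}}` is bijective. -/
theorem NSym_free_on_chromatic_generators
    (E : ∀ i : ℕ, Finset (Fin (i + 1) × Fin (i + 1)))
    (hE : ∀ i, ∀ e ∈ E i, e.1 ≠ e.2)
    (hconn : ∀ i, (arcGraph (E i)).Connected) :
    Function.Bijective
      (FreeAlgebra.lift ℚ (fun i : ℕ => XD (E i) inferInstance) :
        FreeAlgebra ℚ ℕ →ₐ[ℚ] NSym) := by
  exact NSym_free_on_chromatic_generators_general (fun i => Fintype.card_fin (i + 1))
    (fun _ => inferInstance) E hE hconn

end
end

section
/- (Cho–van Willigenburg) Let {G_i}_{i ≥ 1} be a family of connected finite simple graphs with |V(G_i)| = i for every i. Then the chromatic symmetric functions X_{G_1}, X_{G_2}, … are algebraically independent over ℚ, and the ℚ-subalgebra of MvPowerSeries ℕ ℚ that they generate equals the ℚ-subalgebra generated by the power sums {p_n : n ≥ 1} (i.e., the algebra Sym of symmetric functions): Sym = ℚ[X_{G_1}, X_{G_2}, …]. -/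
open scoped Classical

noncomputable section

/-! For positive vertex weights of total `n`, deletion–contraction shows that `X_G` is congruent to
`(-1)^(|V|+1) b p_n` modulo `ℚ[p_1, …, p_{n-1}]` for some natural number `b`: deleting an edge keeps
`|V|` and contracting one lowers it by one, so the contributions to `b` never cancel. Contraction
preserves connectedness, so `b > 0` for connected `G`. Hence the `X_{G_n}` are triangular in the
power sums, and both families generate the same algebra.

Independence uses `∂p_n/∂x_i = n x_i^(n-1)`: by triangularity `∂X_{G_n}/∂x_i` is the value at `x_i`
of a polynomial of degree `n - 1` that does not depend on `i`. A linear relation among these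
derivatives for all `i` is a polynomial with infinitely many roots `x_i`, hence trivial, and the
Jacobian criterion applies. -/

section JacobianCriterion

open MvPolynomial

variable {R A M ι κ : Type*}

theorem totalDegree_pderiv_lt [CommSemiring R] {P : MvPolynomial ι R} {i : ι}
    (h : pderiv i P ≠ 0) : (pderiv i P).totalDegree < P.totalDegree := by
  obtain ⟨m, hm, hdeg⟩ : ∃ m ∈ (pderiv i P).support, (pderiv i P).totalDegree = m.degree :=
    Finset.exists_mem_eq_sup _ (support_nonempty.2 h) _
  rw [mem_support_iff, coeff_pderiv] at hm
  calc (pderiv i P).totalDegree = m.degree := hdeg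
    _ < (m + Finsupp.single i 1).degree := by simp
    _ ≤ P.totalDegree := le_totalDegree (mem_support_iff.2 (left_ne_zero_of_mul hm))

theorem eq_C_of_pderiv_eq_zero [CommRing R] [IsAddTorsionFree R] {P : MvPolynomial ι R}
    (h : ∀ i, pderiv i P = 0) : P = C (constantCoeff P) := by
  refine coe_injective ι R (MvPowerSeries.pderiv.ext (fun i => ?_) ?_)
  · rw [MvPowerSeries.pderiv_coe, MvPowerSeries.pderiv_coe, h, pderiv_C]
  · simp only [← MvPowerSeries.coeff_zero_eq_constantCoeff_apply, coeff_coe, coeff_zero_C,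
      constantCoeff_eq]

theorem derivation_aeval_of_mem_supported [CommSemiring R] [CommSemiring A] [Algebra R A]
    [AddCommMonoid M] [Module R M] [Module A M] (D : Derivation R A M) (f : ι → A)
    {s : Finset ι} {P : MvPolynomial ι R} (hP : P ∈ supported R (s : Set ι)) :
    D (aeval f P) = ∑ i ∈ s, aeval f (pderiv i P) • D (f i) := by
  induction hP using Algebra.adjoin_induction with
  | mem P hP =>
    obtain ⟨j, hj, rfl⟩ := hP
    simp [pderiv_X, Pi.single_apply, apply_ite, ite_smul, Finset.sum_ite_eq, Finset.mem_coe.1 hj]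
  | algebraMap c => simp
  | add P Q _ _ ihP ihQ => simp only [map_add, ihP, ihQ, add_smul, Finset.sum_add_distrib]
  | mul P Q _ _ ihP ihQ =>
    simp only [map_mul, map_add, Derivation.leibniz, ihP, ihQ, add_smul, Finset.sum_add_distrib,
      Finset.smul_sum, smul_eq_mul, mul_smul]

theorem algebraicIndependent_of_linearIndependent_derivation [CommRing R] [IsAddTorsionFree R]
    [CommRing A] [Algebra R A] [FaithfulSMul R A] [AddCommGroup M] [Module R M] [Module A M]
    (D : κ → Derivation R A M) {f : ι → A}
    (hf : LinearIndependent A fun i k => D k (f i)) : AlgebraicIndependent R f := by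
  rw [algebraicIndependent_iff]
  intro P hP
  induction hd : P.totalDegree using Nat.strong_induction_on generalizing P with
  | _ d ih =>
    subst hd
    have hrel : ∑ i ∈ P.vars, aeval f (pderiv i P) • (fun k => D k (f i)) = 0 := by
      ext k
      simpa [hP] using (derivation_aeval_of_mem_supported (D k) f P.mem_supported_vars).symm
    have haeval (i : ι) : aeval f (pderiv i P) = 0 := by
      by_cases hi : i ∈ P.vars
      · exact linearIndependent_iff'.1 hf _ _ hrel i hi
      · rw [pderiv_eq_zero_of_notMem_vars hi, map_zero]
    have hpderiv (i : ι) : pderiv i P = 0 := by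
      by_contra hne
      exact hne (ih _ (totalDegree_pderiv_lt hne) _ (haeval i) rfl)
    rw [eq_C_of_pderiv_eq_zero hpderiv] at hP ⊢
    rw [aeval_C, FaithfulSMul.algebraMap_eq_zero_iff] at hP
    rw [hP, map_zero]

theorem linearIndependent_polynomial_eval [CommRing R] [IsDomain R] [Infinite κ]
    {q : ι → Polynomial R} (hq : LinearIndependent R q) {x : κ → R} (hx : Function.Injective x) :
    LinearIndependent R fun i k => (q i).eval (x k) := by
  refine hq.map' (LinearMap.pi fun k => Polynomial.leval (x k)) (LinearMap.ker_eq_bot'.2 ?_)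
  refine fun p hp => Polynomial.eq_zero_of_infinite_isRoot p ?_
  exact (Set.infinite_range_of_injective hx).mono (Set.range_subset_iff.2 (congrFun hp))

end JacobianCriterion

theorem adjoin_range_eq_of_triangular {ι R A : Type*} [Preorder ι] [WellFoundedLT ι] [CommRing R]
    [Ring A] [Algebra R A] {f p : ι → A} {a : ι → R} (ha : ∀ i, IsUnit (a i))
    (h : ∀ i, f i - a i • p i ∈ Algebra.adjoin R (p '' Set.Iio i)) :
    Algebra.adjoin R (Set.range f) = Algebra.adjoin R (Set.range p) := by
  apply le_antisymm <;> refine Algebra.adjoin_le (Set.range_subset_iff.2 fun i => ?_)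
  · have hlower := Algebra.adjoin_mono (Set.image_subset_range p _) (h i)
    have hlead := Subalgebra.smul_mem (Algebra.adjoin R (Set.range p))
      (Algebra.subset_adjoin (Set.mem_range_self i)) (a i)
    simpa using add_mem hlower hlead
  · induction i using WellFoundedLT.induction with
    | ind i ih =>
      have hlower := Algebra.adjoin_le (Set.image_subset_iff.2 ih) (h i)
      have hlead : a i • p i ∈ Algebra.adjoin R (Set.range f) := by
        simpa using sub_mem (Algebra.subset_adjoin (Set.mem_range_self i)) hlower
      simpa [Units.smul_def, smul_smul] using
        Subalgebra.smul_mem _ hlead ((ha i).unit⁻¹ : Rˣ).val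

section PowerSums

open MvPowerSeries

theorem coeff_psum (n : ℕ) (d : ℕ →₀ ℕ) :
    coeff d (psum n) = if ∃ i, d = Finsupp.single i n then 1 else 0 :=
  rfl

/-- The subalgebra `ℚ[p_1, …, p_{n-1}]` of symmetric functions generated by the power sums of
degree less than `n`. -/
def psumSubalgebra (n : ℕ) : Subalgebra ℚ (MvPowerSeries ℕ ℚ) :=
  Algebra.adjoin ℚ (psum '' Set.Ico 1 n)

theorem psumSubalgebra_succ (n : ℕ) :
    psumSubalgebra (n + 1) = Algebra.adjoin ℚ ((fun i => psum (i + 1)) '' Set.Iio n) := by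
  have hIco : (· + 1) '' Set.Iio n = Set.Ico 1 (n + 1) := by
    ext k
    cases k <;> simp
  rw [psumSubalgebra, ← hIco, Set.image_image]

theorem pderiv_psum_succ (i n : ℕ) :
    pderiv ℚ i (psum (n + 1)) = (n + 1 : ℚ) • (X i : MvPowerSeries ℕ ℚ) ^ n := by
  ext d
  have hmono : (∃ j, d + Finsupp.single i 1 = Finsupp.single j (n + 1)) ↔
      d = Finsupp.single i n := by
    constructor
    · rintro ⟨j, hj⟩
      obtain rfl : i = j := by
        by_contra hij
        simpa [Finsupp.single_apply, Ne.symm hij] using DFunLike.congr_fun hj i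
      exact add_right_cancel (hj.trans (Finsupp.single_add i n 1))
    · rintro rfl
      exact ⟨i, (Finsupp.single_add i n 1).symm⟩
  rw [coeff_pderiv, coeff_psum, coeff_smul, coeff_X_pow]
  simp only [hmono]
  split_ifs with hd <;> simp [hd]

theorem exists_eval_X_eq_pderiv_of_mem_psumSubalgebra {n : ℕ} {r : MvPowerSeries ℕ ℚ}
    (hr : r ∈ psumSubalgebra (n + 1)) :
    ∃ q ∈ Polynomial.degreeLT (MvPowerSeries ℕ ℚ) n, ∀ i, pderiv ℚ i r = q.eval (X i) := by
  rw [psumSubalgebra_succ] at hr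
  induction hr using Algebra.adjoin_induction with
  | mem x hx =>
    obtain ⟨k, hk, rfl⟩ := hx
    refine ⟨(k + 1 : ℚ) • Polynomial.X ^ k, ?_, fun i => by simp [pderiv_psum_succ]⟩
    rw [Polynomial.mem_degreeLT]
    refine (Polynomial.degree_smul_le _ _).trans_lt ?_
    rw [Polynomial.degree_X_pow]
    exact_mod_cast hk
  | algebraMap c => exact ⟨0, zero_mem _, fun i => by simp⟩
  | add x y _ _ ihx ihy =>
    obtain ⟨p, hp, hpx⟩ := ihx
    obtain ⟨q, hq, hqy⟩ := ihy
    exact ⟨p + q, add_mem hp hq, fun i => by simp [hpx, hqy]⟩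
  | mul x y _ _ ihx ihy =>
    obtain ⟨p, hp, hpx⟩ := ihx
    obtain ⟨q, hq, hqy⟩ := ihy
    exact ⟨x • q + y • p, add_mem (Submodule.smul_mem _ _ hq) (Submodule.smul_mem _ _ hp),
      fun i => by simp [hpx, hqy]⟩

theorem exists_degree_eq_eval_X_eq_pderiv {n : ℕ} {g : MvPowerSeries ℕ ℚ} {c : ℚ} (hc : c ≠ 0)
    (hg : g - c • psum (n + 1) ∈ psumSubalgebra (n + 1)) :
    ∃ q : Polynomial (MvPowerSeries ℕ ℚ), q.degree = n ∧ ∀ i, pderiv ℚ i g = q.eval (X i) := by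
  obtain ⟨q, hq, hqr⟩ := exists_eval_X_eq_pderiv_of_mem_psumSubalgebra hg
  have hlead : algebraMap ℚ (MvPowerSeries ℕ ℚ) (c * (n + 1)) ≠ 0 := by
    rw [Ne, FaithfulSMul.algebraMap_eq_zero_iff]
    positivity
  have hdeg := Polynomial.degree_C_mul_X_pow n hlead
  refine ⟨Polynomial.C (algebraMap ℚ _ (c * (n + 1))) * Polynomial.X ^ n + q, ?_, fun i => ?_⟩
  · rwa [Polynomial.degree_add_eq_left_of_degree_lt]
    rwa [hdeg, ← Polynomial.mem_degreeLT]
  · rw [← sub_add_cancel g (c • psum (n + 1)), map_add, hqr, Derivation.map_smul,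
      pderiv_psum_succ, smul_smul, Polynomial.eval_add, add_comm]
    simp only [Polynomial.eval_mul, Polynomial.eval_C, Polynomial.eval_pow, Polynomial.eval_X,
      Algebra.smul_def]

variable {f : ℕ → MvPowerSeries ℕ ℚ} {a : ℕ → ℚ}

theorem algebraicIndependent_of_sub_smul_psum_mem (ha : ∀ n, a n ≠ 0)
    (hf : ∀ n, f n - a n • psum (n + 1) ∈ psumSubalgebra (n + 1)) : AlgebraicIndependent ℚ f := by
  choose q hdeg hq using fun n => exists_degree_eq_eval_X_eq_pderiv (ha n) (hf n)
  have : IsDomain (MvPowerSeries ℕ ℚ) := NoZeroDivisors.to_isDomain _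
  refine algebraicIndependent_of_linearIndependent_derivation (fun i => pderiv ℚ i) ?_
  simp only [hq]
  exact linearIndependent_polynomial_eval (Polynomial.Sequence.mk q hdeg).linearIndependent
    fun _ _ => X_inj.1

theorem adjoin_range_eq_adjoin_psum_of_sub_smul_psum_mem (ha : ∀ n, a n ≠ 0)
    (hf : ∀ n, f n - a n • psum (n + 1) ∈ psumSubalgebra (n + 1)) :
    Algebra.adjoin ℚ (Set.range f) = Algebra.adjoin ℚ {x | ∃ n : ℕ, 1 ≤ n ∧ x = psum n} := by
  simp only [psumSubalgebra_succ] at hf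
  rw [adjoin_range_eq_of_triangular (fun n => (ha n).isUnit) hf]
  congr 1
  ext x
  constructor
  · rintro ⟨n, rfl⟩
    exact ⟨n + 1, n.succ_pos, rfl⟩
  · rintro ⟨n, hn, rfl⟩
    exact ⟨n - 1, congrArg psum (Nat.sub_add_cancel hn)⟩

end PowerSums

section Contraction

variable {V W : Type*} {G : SimpleGraph V} {u v : V}

/-- The vertex map of the contraction of an edge `uv`: it identifies `v` with `u`. The contracted
graph `G / uv` is `G.map (contractVertex huv)`, in which `uv` itself disappears because
`SimpleGraph.map` discards loops. -/
def contractVertex (huv : u ≠ v) (x : V) : {x : V // x ≠ v} :=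
  if hx : x = v then ⟨u, huv⟩ else ⟨x, hx⟩

theorem contractVertex_surjective (huv : u ≠ v) : Function.Surjective (contractVertex huv) :=
  fun ⟨x, hx⟩ => ⟨x, dif_neg hx⟩

theorem contractVertex_eq_iff (huv : u ≠ v) {x y : V} :
    contractVertex huv x = contractVertex huv y ↔ x = y ∨ s(x, y) = s(u, v) := by
  unfold contractVertex
  split_ifs <;> grind

theorem contractVertex_endpoints (huv : u ≠ v) : contractVertex huv u = contractVertex huv v :=
  (contractVertex_eq_iff huv).2 (.inr rfl)

theorem connected_map_of_surjective {f : V → W} (hf : Function.Surjective f) (hG : G.Connected) :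
    (G.map f).Connected := by
  have hwalk {x y : V} (p : G.Walk x y) : (G.map f).Reachable (f x) (f y) := by
    induction p with
    | nil => rfl
    | @cons x z _ hadj _ ih =>
      by_cases hxz : f x = f z
      · rwa [hxz]
      · exact (SimpleGraph.map_adj_apply' hadj hxz).reachable.trans ih
  have := hG.nonempty.map f
  exact ⟨hf.forall₂.2 fun x y => (hG.preconnected x y).elim hwalk⟩

theorem ncard_edgeSet_deleteEdges_lt [Finite V] (h : G.Adj u v) :
    (G.deleteEdges {s(u, v)}).edgeSet.ncard < G.edgeSet.ncard := by
  rw [SimpleGraph.edgeSet_deleteEdges]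
  exact Set.ncard_sdiff_singleton_lt_of_mem h

theorem ncard_edgeSet_map_lt [Finite V] {f : V → W} (h : G.Adj u v) (hf : f u = f v) :
    (G.map f).edgeSet.ncard < G.edgeSet.ncard := by
  have hsub : (G.map f).edgeSet ⊆ Sym2.map f '' (G.deleteEdges {s(u, v)}).edgeSet := by
    intro e he
    induction e with
    | _ x y =>
      obtain ⟨hne, a, b, hab, rfl, rfl⟩ := he
      refine ⟨s(a, b), SimpleGraph.deleteEdges_adj.2 ⟨hab, fun hmem => hne ?_⟩, rfl⟩
      rcases Sym2.eq_iff.1 hmem with ⟨rfl, rfl⟩ | ⟨rfl, rfl⟩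
      exacts [hf, hf.symm]
  calc (G.map f).edgeSet.ncard
      ≤ (Sym2.map f '' (G.deleteEdges {s(u, v)}).edgeSet).ncard :=
        Set.ncard_le_ncard hsub (Set.toFinite _)
    _ ≤ (G.deleteEdges {s(u, v)}).edgeSet.ncard := Set.ncard_image_le (Set.toFinite _)
    _ < G.edgeSet.ncard := ncard_edgeSet_deleteEdges_lt h

end Contraction

section WeightedChromatic

open MvPowerSeries

variable {V W : Type} {G : SimpleGraph V} {u v : V}

theorem proper_iff_proper_deleteEdges (h : G.Adj u v) {κ : V → ℕ} :
    Proper G κ ↔ Proper (G.deleteEdges {s(u, v)}) κ ∧ κ u ≠ κ v := by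
  simp only [Proper, SimpleGraph.deleteEdges_adj, Set.mem_singleton_iff]
  grind [Sym2.eq_iff]

theorem proper_map_contractVertex (huv : u ≠ v) {κ : {x : V // x ≠ v} → ℕ} :
    Proper (G.map (contractVertex huv)) κ ↔
      Proper (G.deleteEdges {s(u, v)}) (κ ∘ contractVertex huv) := by
  constructor
  · intro hκ x y hxy
    rw [SimpleGraph.deleteEdges_adj] at hxy
    refine hκ _ _ (SimpleGraph.map_adj_apply' hxy.1 fun hc => ?_)
    exact ((contractVertex_eq_iff huv).1 hc).elim hxy.1.ne hxy.2
  · rintro hκ _ _ ⟨hne, x, y, hxy, rfl, rfl⟩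
    exact hκ x y (SimpleGraph.deleteEdges_adj.2
      ⟨hxy, fun hmem => hne ((contractVertex_eq_iff huv).2 (.inr hmem))⟩)

variable [Fintype V] {w : V → ℕ}

/-- The exponent of the monomial `Π_v x_{κ(v)}^{w(v)}` of a coloring `κ` of a graph with vertex
weights `w`. -/
def coloringExponent (w κ : V → ℕ) : ℕ →₀ ℕ :=
  ∑ v, Finsupp.single (κ v) (w v)

/-- The proper colorings of `G` whose weighted monomial has exponent `d`. -/
def weightedColorings (G : SimpleGraph V) (w : V → ℕ) (d : ℕ →₀ ℕ) : Set (V → ℕ) :=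
  {κ | Proper G κ ∧ coloringExponent w κ = d}

/-- The chromatic symmetric function `Σ_κ Π_v x_{κ(v)}^{w(v)}` of a vertex-weighted graph. Unlike
`XG`, it satisfies a deletion–contraction relation. Only positive weights are meaningful: a vertex
of weight `0` may take infinitely many colors without changing the monomial, and `Set.ncard` then
returns `0`. -/
def weightedXG (G : SimpleGraph V) (w : V → ℕ) : MvPowerSeries ℕ ℚ :=
  fun d => (weightedColorings G w d).ncard

theorem coeff_weightedXG (G : SimpleGraph V) (w : V → ℕ) (d : ℕ →₀ ℕ) :
    coeff d (weightedXG G w) = (weightedColorings G w d).ncard :=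
  rfl

/-- The weights on the target of `f` for which the weight of a vertex is the total weight of its
fiber; merging vertices adds their weights. -/
def fiberWeight (f : V → W) (w : V → ℕ) (y : W) : ℕ :=
  ∑ x with f x = y, w x

theorem fiberWeight_pos {f : V → W} (hf : Function.Surjective f) (hw : ∀ v, 0 < w v) (y : W) :
    0 < fiberWeight f w y := by
  obtain ⟨x, rfl⟩ := hf y
  exact Finset.sum_pos (fun _ _ => hw _) ⟨x, by simp⟩

theorem sum_fiberWeight [Fintype W] (f : V → W) (w : V → ℕ) : ∑ y, fiberWeight f w y = ∑ x, w x :=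
  Finset.sum_fiberwise _ _ _

theorem coloringExponent_fiberWeight [Fintype W] (f : V → W) (w : V → ℕ) (κ : W → ℕ) :
    coloringExponent (fiberWeight f w) κ = coloringExponent w (κ ∘ f) := by
  simp only [coloringExponent, fiberWeight, Finsupp.single_finsetSum]
  rw [← Finset.sum_fiberwise Finset.univ f]
  refine Finset.sum_congr rfl fun y _ => Finset.sum_congr rfl fun x hx => ?_
  rw [Function.comp_apply, (Finset.mem_filter.1 hx).2]

theorem XG_eq_weightedXG [DecidableEq V] (G : SimpleGraph V) : XG G = weightedXG G fun _ => 1 := by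
  ext d
  change (Set.ncard {κ : V → ℕ | Proper G κ ∧ _} : ℚ) = _
  rw [coeff_weightedXG]
  congr 2
  ext κ
  simp [weightedColorings, coloringExponent, Finsupp.ext_iff, Finsupp.finsetSum_apply,
    Finsupp.single_apply, Finset.sum_boole]

theorem weightedXG_bot (hw : ∀ v, 0 < w v) : weightedXG ⊥ w = ∏ v, psum (w v) := by
  ext d
  let e (κ : V → ℕ) : V →₀ (ℕ →₀ ℕ) :=
    Finsupp.equivFunOnFinite.symm fun v => Finsupp.single (κ v) (w v)
  have he : Function.Injective e := fun κ κ' h => funext fun v =>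
    (Finsupp.single_left_inj (hw v).ne').1 (DFunLike.congr_fun h v)
  have himage : e '' weightedColorings ⊥ w d =
      ({l ∈ Finset.univ.finsuppAntidiag d | ∀ v, ∃ i, l v = Finsupp.single i (w v)} :
        Finset (V →₀ ℕ →₀ ℕ)) := by
    ext l
    simp only [Set.mem_image, Finset.coe_filter, Set.mem_ofPred_eq, Finset.mem_finsuppAntidiag]
    constructor
    · rintro ⟨κ, ⟨-, hκ⟩, rfl⟩
      exact ⟨⟨hκ, Finset.subset_univ _⟩, fun v => ⟨κ v, rfl⟩⟩
    · rintro ⟨⟨hsum, -⟩, hl⟩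
      choose κ hκ using hl
      obtain rfl : e κ = l := Finsupp.ext fun v => (hκ v).symm
      exact ⟨κ, ⟨fun _ _ h => h.elim, hsum⟩, rfl⟩
  calc coeff d (weightedXG ⊥ w) = (e '' weightedColorings ⊥ w d).ncard := by
        rw [coeff_weightedXG, Set.ncard_image_of_injective _ he]
    _ = ∑ l ∈ Finset.univ.finsuppAntidiag d, ∏ v, coeff (l v) (psum (w v)) := by
        simp only [himage, Set.ncard_coe_finset, coeff_psum, Finset.prod_boole, Finset.mem_univ,
          forall_const, Finset.sum_boole]
    _ = coeff d (∏ v, psum (w v)) := (coeff_prod _ _ _).symm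

theorem weightedColorings_finite (hw : ∀ v, 0 < w v) (d : ℕ →₀ ℕ) :
    (weightedColorings G w d).Finite := by
  refine (Set.Finite.pi' fun _ => d.support.finite_toSet).subset ?_
  rintro κ ⟨-, rfl⟩ v
  have hle : w v ≤ coloringExponent w κ (κ v) := by
    simpa [coloringExponent, Finsupp.finsetSum_apply] using Finset.single_le_sum
      (f := fun x => Finsupp.single (κ x) (w x) (κ v)) (fun _ _ => Nat.zero_le _)
      (Finset.mem_univ v)
  exact Finsupp.mem_support_iff.2 ((hw v).trans_le hle).ne'

theorem weightedColorings_deleteEdges (h : G.Adj u v) (d : ℕ →₀ ℕ) :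
    weightedColorings (G.deleteEdges {s(u, v)}) w d = weightedColorings G w d ∪
      (· ∘ contractVertex h.ne) '' weightedColorings (G.map (contractVertex h.ne))
        (fiberWeight (contractVertex h.ne) w) d := by
  ext κ
  simp only [weightedColorings, Set.mem_union, Set.mem_image, Set.mem_ofPred_eq,
    proper_map_contractVertex, coloringExponent_fiberWeight, proper_iff_proper_deleteEdges h]
  constructor
  · rintro ⟨hκ, hd⟩
    by_cases huv : κ u = κ v
    · have hfactors : κ.FactorsThrough (contractVertex h.ne) := by
        intro x y hxy
        rcases (contractVertex_eq_iff h.ne).1 hxy with rfl | hs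
        · rfl
        · rcases Sym2.eq_iff.1 hs with ⟨rfl, rfl⟩ | ⟨rfl, rfl⟩
          exacts [huv, huv.symm]
      obtain ⟨κ', rfl⟩ := (Function.factorsThrough_iff κ).1 hfactors
      exact .inr ⟨κ', ⟨hκ, hd⟩, rfl⟩
    · exact .inl ⟨⟨hκ, huv⟩, hd⟩
  · rintro (⟨⟨hκ, -⟩, hd⟩ | ⟨κ', hκ', rfl⟩)
    exacts [⟨hκ, hd⟩, hκ']

theorem weightedXG_eq_deleteEdges_sub_contract (hw : ∀ v, 0 < w v) (h : G.Adj u v) :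
    weightedXG G w = weightedXG (G.deleteEdges {s(u, v)}) w -
      weightedXG (G.map (contractVertex h.ne)) (fiberWeight (contractVertex h.ne) w) := by
  have hc := contractVertex_surjective h.ne
  rw [eq_sub_iff_add_eq]
  ext d
  rw [map_add, coeff_weightedXG, coeff_weightedXG, coeff_weightedXG,
    weightedColorings_deleteEdges h, Set.ncard_union_eq ?_ (weightedColorings_finite hw d)
      ((weightedColorings_finite (fiberWeight_pos hc hw) d).image _),
    Set.ncard_image_of_injective _ hc.injective_comp_right, Nat.cast_add]
  rw [Set.disjoint_left]
  rintro κ ⟨hκ, -⟩ ⟨κ', -, rfl⟩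
  exact hκ u v h (congrArg κ' (contractVertex_endpoints h.ne))

theorem exists_weightedXG_bot_sub_smul_psum_mem (hw : ∀ v, 0 < w v) :
    ∃ b : ℕ, ((⊥ : SimpleGraph V).Connected → 0 < b) ∧
      weightedXG ⊥ w - ((-1) ^ (Fintype.card V + 1) * b : ℚ) • psum (∑ v, w v) ∈
        psumSubalgebra (∑ v, w v) := by
  by_cases hconn : (⊥ : SimpleGraph V).Connected
  · have := hconn.nonempty
    have := SimpleGraph.preconnected_bot_iff_subsingleton.1 hconn.preconnected
    obtain ⟨_⟩ := nonempty_unique V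
    refine ⟨1, fun _ => one_pos, ?_⟩
    simp [weightedXG_bot hw]
  · refine ⟨0, fun h => (hconn h).elim, ?_⟩
    have hlt (v : V) : w v < ∑ x, w x := by
      have : Nontrivial V := by
        by_contra hV
        rw [not_nontrivial_iff_subsingleton] at hV
        exact hconn { preconnected := SimpleGraph.preconnected_bot, nonempty := ⟨v⟩ }
      obtain ⟨x, hx⟩ := exists_ne v
      exact Finset.single_lt_sum hx (Finset.mem_univ v) (Finset.mem_univ x) (hw x)
        fun _ _ _ => Nat.zero_le _
    rw [weightedXG_bot hw, Nat.cast_zero, mul_zero, zero_smul, sub_zero]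
    exact Subalgebra.prod_mem _ fun v _ =>
      Algebra.subset_adjoin (Set.mem_image_of_mem psum ⟨hw v, hlt v⟩)

end WeightedChromatic

theorem exists_weightedXG_sub_smul_psum_mem {V : Type} [Fintype V] (G : SimpleGraph V)
    {w : V → ℕ} (hw : ∀ v, 0 < w v) :
    ∃ b : ℕ, (G.Connected → 0 < b) ∧
      weightedXG G w - ((-1) ^ (Fintype.card V + 1) * b : ℚ) • psum (∑ v, w v) ∈
        psumSubalgebra (∑ v, w v) := by
  induction hm : G.edgeSet.ncard using Nat.strong_induction_on generalizing V with
  | _ m ih =>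
    subst hm
    obtain rfl | hG := eq_or_ne G ⊥
    · exact exists_weightedXG_bot_sub_smul_psum_mem hw
    obtain ⟨u, v, huv⟩ := SimpleGraph.ne_bot_iff_exists_adj.1 hG
    have hc := contractVertex_surjective huv.ne
    obtain ⟨b, -, hb⟩ := ih _ (ncard_edgeSet_deleteEdges_lt huv) _ hw rfl
    obtain ⟨b', hb'pos, hb'⟩ := ih _ (ncard_edgeSet_map_lt huv (contractVertex_endpoints huv.ne)) _
      (fiberWeight_pos hc hw) rfl
    refine ⟨b + b', fun hconn => ?_, ?_⟩
    · exact Nat.add_pos_right b (hb'pos (connected_map_of_surjective hc hconn))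
    have hcard : Fintype.card V = Fintype.card {x // x ≠ v} + 1 := by
      rw [← Fintype.card_congr (Equiv.optionSubtypeNe v), Fintype.card_option]
    rw [sum_fiberWeight] at hb'
    convert sub_mem hb hb' using 1
    rw [weightedXG_eq_deleteEdges_sub_contract hw huv, hcard, Nat.cast_add, sub_sub_sub_comm,
      ← sub_smul]
    congr 2
    ring

theorem exists_XG_sub_smul_psum_mem {V : Type} [Fintype V] [DecidableEq V] {G : SimpleGraph V}
    (hG : G.Connected) :
    ∃ a : ℚ, a ≠ 0 ∧
      XG G - a • psum (Fintype.card V) ∈ psumSubalgebra (Fintype.card V) := by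
  obtain ⟨b, hb, hmem⟩ := exists_weightedXG_sub_smul_psum_mem G (w := fun _ => 1) fun _ => one_pos
  rw [Finset.sum_const, smul_eq_mul, mul_one, Finset.card_univ, ← XG_eq_weightedXG] at hmem
  have hb0 : (b : ℚ) ≠ 0 := Nat.cast_ne_zero.2 (hb hG).ne'
  exact ⟨_, mul_ne_zero (by simp) hb0, hmem⟩

theorem sym_free_on_chromatic_generators_general {V : ℕ → Type} [∀ i, Fintype (V i)]
    [∀ i, DecidableEq (V i)] (hcard : ∀ i, Fintype.card (V i) = i + 1)
    (G : ∀ i, SimpleGraph (V i)) (hconn : ∀ i, (G i).Connected) :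
    AlgebraicIndependent ℚ (fun i => XG (G i)) ∧
    Algebra.adjoin ℚ (Set.range fun i => XG (G i)) =
      Algebra.adjoin ℚ {x : MvPowerSeries ℕ ℚ | ∃ n : ℕ, 1 ≤ n ∧ x = psum n} := by
  choose a ha hmem using fun i => exists_XG_sub_smul_psum_mem (hconn i)
  simp only [hcard] at hmem
  exact ⟨algebraicIndependent_of_sub_smul_psum_mem ha hmem,
    adjoin_range_eq_adjoin_psum_of_sub_smul_psum_mem ha hmem⟩

/-- Cho–van Willigenburg.  Let `{G_i}_{i ≥ 1}` be a family of
connected finite simple graphs with `|V(G_i)| = i` for every `i` (here `G_{i+1}`, for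
`i : ℕ`, is a connected simple graph on `Fin (i+1)`).  Then the chromatic symmetric
functions `X_{G_1}, X_{G_2}, …` are algebraically independent over `ℚ`, and the
`ℚ`-subalgebra of `MvPowerSeries ℕ ℚ` that they generate equals the `ℚ`-subalgebra
`Sym` generated by the power sums `{p_n : n ≥ 1}`. -/
theorem sym_free_on_chromatic_generators
    (G : ∀ i : ℕ, SimpleGraph (Fin (i + 1)))
    (hconn : ∀ i, (G i).Connected) :
    AlgebraicIndependent ℚ (fun i : ℕ => XG (G i)) ∧
    Algebra.adjoin ℚ (Set.range fun i : ℕ => XG (G i)) =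
      Algebra.adjoin ℚ {x : MvPowerSeries ℕ ℚ | ∃ n : ℕ, 1 ≤ n ∧ x = psum n} :=
  sym_free_on_chromatic_generators_general (fun _ => Fintype.card_fin _) G hconn

end
end
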